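/- For every α ∈ ℝ, T > 0, L > 0 and B > 0 there exists a constant C > 0 such that the following holds. Let V₁, V₂ : ℝ → ℝ be smooth 2L-periodic potentials with sup_x (|Vᵢ(x)| + |Vᵢ′(x)|) ≤ B for i = 1, 2, and let ψ₁, ψ₂ : ℝ × ℝ → ℂ be smooth, 2L-periodic in the space variable, satisfying i·∂ₜψᵢ = −(1/2)·∂ₓₓψᵢ + Vᵢ(x)·ψᵢ + α·|ψᵢ|²·ψᵢ with the same initial data ψ₁(0,·) = ψ₂(0,·), and with sup_{t∈[0,T], x} (|ψᵢ(t,x)| + |∂ₓψᵢ(t,x)|) ≤ B for i = 1, 2. Then for all t ∈ [0, T]: ‖ψ₁(t,·) − ψ₂(t,·)‖_{H¹} ≤ C·‖V₁ − V₂‖_{H¹}, where ‖f‖_{H¹} := ( ∫_{−L}^{L} (|f(x)|² + |f′(x)|²) dx )^{1/2}. -/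

import Mathlib

/-!
The proof is an energy estimate. The difference `w = ψ₁ - ψ₂` satisfies
`wₜ = (i/2) wₓₓ - i g` and, differentiating in `x`, `wₓₜ = (i/2) wₓₓₓ - i gₓ`
(`solution_facts`), with `g` the difference of the terms `V ψ + α |ψ|² ψ` of the two equations.
Since all of `ψᵢ`, `∂ₓψᵢ`, `V₁`, `V₁'` are bounded by `B`, there are pointwise Lipschitz bounds
`|g| ≤ K (|w| + |δ|)` and `|gₓ| ≤ K (|w| + |wₓ| + |δ| + |δ'|)`, where `δ = V₁ - V₂` and
`K = B + 6 |α| B²` (`norm_nlsSource_sub_le`, `norm_nlsSourceX_sub_le`).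

The Schrödinger part is skew-adjoint, which shows up pointwise: the density
`e = |w|² + |wₓ|²` satisfies `∂ₜe ≤ ∂ₓq + 5 K (e + δ² + δ'²)` with the periodic flux
`q = ⟪w, i wₓ⟫ + ⟪wₓ, i wₓₓ⟫` (`energy_density_le`). Integrating over a period removes `q`, and
Grönwall's inequality with `e = 0` at time `0` bounds `∫ e` by `exp (5 K T) ∫ (δ² + δ'²)`
(`integral_le_of_balance_law`).
-/

open MeasureTheory intervalIntegral

/-- Differentiation under the integral sign over a fixed compact interval; joint continuity of
`et` makes it bounded for `(s, x)` in `[t - 1, t + 1] × [-L, L]`, which is the domination needed. -/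
lemma hasDerivAt_integral_param (L : ℝ) (e et : ℝ → ℝ → ℝ)
    (he : Continuous fun p : ℝ × ℝ => e p.1 p.2) (het : Continuous fun p : ℝ × ℝ => et p.1 p.2)
    (hd : ∀ t x, HasDerivAt (fun s => e s x) (et t x) t) (t : ℝ) :
    HasDerivAt (fun s => ∫ x in (-L)..L, e s x) (∫ x in (-L)..L, et t x) t := by
  obtain ⟨M, hM⟩ := ((isCompact_Icc (a := t - 1) (b := t + 1)).prod
    (isCompact_uIcc (a := -L) (b := L))).exists_bound_of_continuousOn het.continuousOn
  have hc : ∀ s, Continuous (e s) := fun s =>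
    he.comp (Continuous.prodMk (continuous_const (y := s)) continuous_id)
  have hct : Continuous (et t) :=
    het.comp (Continuous.prodMk (continuous_const (y := t)) continuous_id)
  refine (hasDerivAt_integral_of_dominated_loc_of_deriv_le (μ := volume) (bound := fun _ => M)
    (Icc_mem_nhds (a := t - 1) (b := t + 1) (by linarith) (by linarith))
    (.of_forall fun s => (hc s).aestronglyMeasurable) ((hc t).intervalIntegrable _ _)
    hct.aestronglyMeasurable (.of_forall fun x hx s hs => ?_) (by simp)
    (.of_forall fun x _ s _ => hd s x)).2
  exact hM (s, x) ⟨hs, Set.uIoc_subset_uIcc hx⟩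

/-- Grönwall's inequality for a density `e` obeying the balance law `∂ₜe ≤ ∂ₓq + K (e + d)`.
The flux `q` takes equal values at `±L`, so it disappears after integration, leaving
`E' ≤ K (E + D)` for `E = ∫ e` and `D = ∫ d`. Since `E 0 = 0`, this gives
`E + D ≤ D exp (K t)`. -/
lemma integral_le_of_balance_law (T L K : ℝ) (hL : 0 < L) (hK : 0 ≤ K)
    (e et q qx : ℝ → ℝ → ℝ) (d : ℝ → ℝ)
    (he : Continuous fun p : ℝ × ℝ => e p.1 p.2) (het : Continuous fun p : ℝ × ℝ => et p.1 p.2)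
    (hd : ∀ t x, HasDerivAt (fun s => e s x) (et t x) t)
    (hq : ∀ t x, HasDerivAt (q t) (qx t x) x) (hqx : ∀ t, Continuous (qx t))
    (hper : ∀ t, q t L = q t (-L)) (hdc : Continuous d) (hd0 : ∀ x, 0 ≤ d x)
    (hle : ∀ t ∈ Set.Icc 0 T, ∀ x, et t x ≤ qx t x + K * (e t x + d x))
    (h0 : ∀ x, e 0 x = 0) {t : ℝ} (ht : t ∈ Set.Icc 0 T) :
    ∫ x in (-L)..L, e t x ≤ Real.exp (K * T) * ∫ x in (-L)..L, d x := by
  have hc : ∀ s, Continuous (e s) := fun s =>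
    he.comp (Continuous.prodMk (continuous_const (y := s)) continuous_id)
  have hct : ∀ s, Continuous (et s) := fun s =>
    het.comp (Continuous.prodMk (continuous_const (y := s)) continuous_id)
  set D := ∫ x in (-L)..L, d x with hD
  have hD0 : 0 ≤ D := integral_nonneg (by linarith) fun x _ => hd0 x
  have hder := hasDerivAt_integral_param L e et he het hd
  have hbound : ∀ s ∈ Set.Icc 0 T,
      ∫ x in (-L)..L, et s x ≤ K * ((∫ x in (-L)..L, e s x) + D) := by
    intro s hs
    have hflux : ∫ x in (-L)..L, qx s x = 0 := by
      rw [integral_eq_sub_of_hasDerivAt (fun x _ => hq s x) ((hqx s).intervalIntegrable _ _),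
        hper, sub_self]
    calc ∫ x in (-L)..L, et s x ≤ ∫ x in (-L)..L, (qx s x + K * (e s x + d x)) :=
          integral_mono_on (by linarith) ((hct s).intervalIntegrable _ _)
            (((hqx s).add (continuous_const.mul ((hc s).add hdc))).intervalIntegrable _ _)
            fun x _ => hle s hs x
      _ = K * ((∫ x in (-L)..L, e s x) + D) := by
          have hsum : Continuous fun x => K * (e s x + d x) :=
            continuous_const.mul ((hc s).add hdc)
          rw [integral_add ((hqx s).intervalIntegrable _ _)
            (hsum.intervalIntegrable _ _), hflux, zero_add,
            intervalIntegral.integral_const_mul, integral_add ((hc s).intervalIntegrable _ _)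
            (hdc.intervalIntegrable _ _)]
  have hg := le_gronwallBound_of_liminf_deriv_right_le
    (f := fun s => (∫ x in (-L)..L, e s x) + D) (f' := fun s => ∫ x in (-L)..L, et s x)
    (δ := D) (K := K) (ε := 0) (a := 0) (b := T)
    (fun s _ => ((hder s).add_const D).continuousAt.continuousWithinAt)
    (fun s _ r hr => ((hder s).add_const D).hasDerivWithinAt.liminf_right_slope_le hr)
    (by simp [h0])
    (fun s hs => by simpa using hbound s ⟨hs.1, hs.2.le⟩) t ht
  rw [gronwallBound_ε0, sub_zero] at hg
  have hexp : Real.exp (K * t) ≤ Real.exp (K * T) :=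
    Real.exp_le_exp.2 (mul_le_mul_of_nonneg_left ht.2 hK)
  nlinarith [mul_le_mul_of_nonneg_left hexp hD0]

/-- The partial derivatives `fx`, `ft` of a jointly smooth `f` are jointly smooth, and
`∂ₜ∂ₓf = ∂ₓ∂ₜf`: any `x`-derivative of `ft` is also the `t`-derivative of `fx`. -/
lemma partial_facts (f : ℝ → ℝ → ℂ)
    (hf : ContDiff ℝ (⊤ : ℕ∞) fun p : ℝ × ℝ => f p.1 p.2) :
    ∃ fx ft : ℝ → ℝ → ℂ,
      (ContDiff ℝ (⊤ : ℕ∞) fun p : ℝ × ℝ => fx p.1 p.2) ∧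
      (ContDiff ℝ (⊤ : ℕ∞) fun p : ℝ × ℝ => ft p.1 p.2) ∧
      (∀ t x, HasDerivAt (f t) (fx t x) x) ∧
      (∀ t x, HasDerivAt (fun s => f s x) (ft t x) t) ∧
      ∀ t x z, HasDerivAt (ft t) z x → HasDerivAt (fun s => fx s x) z t := by
  set F : ℝ × ℝ → ℂ := fun p => f p.1 p.2 with hF
  have hF' : ContDiff ℝ (⊤ : ℕ∞) (fderiv ℝ F) := hf.fderiv_right (by simp)
  have key : ∀ (G : ℝ × ℝ → ℂ), Differentiable ℝ G →
      (∀ t x, HasDerivAt (fun y => G (t, y)) (fderiv ℝ G (t, x) (0, 1)) x) ∧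
      (∀ t x, HasDerivAt (fun s => G (s, x)) (fderiv ℝ G (t, x) (1, 0)) t) := by
    intro G hG
    refine ⟨fun t x => ?_, fun t x => ?_⟩
    · exact (hG (t, x)).hasFDerivAt.comp_hasDerivAt x
        ((hasDerivAt_const x t).prodMk (hasDerivAt_id x))
    · exact (hG (t, x)).hasFDerivAt.comp_hasDerivAt t
        ((hasDerivAt_id t).prodMk (hasDerivAt_const t x))
  have hD := hf.differentiable (by simp)
  have hD' : Differentiable ℝ (fderiv ℝ F) := hF'.differentiable (by simp)
  refine ⟨fun t x => fderiv ℝ F (t, x) (0, 1), fun t x => fderiv ℝ F (t, x) (1, 0),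
    hF'.clm_apply contDiff_const, hF'.clm_apply contDiff_const, (key F hD).1, (key F hD).2, ?_⟩
  intro t x z hz
  have hsym : IsSymmSndFDerivAt ℝ F (t, x) :=
    hf.contDiffAt.isSymmSndFDerivAt (by
      rw [minSmoothness_of_isRCLikeNormedField]
      exact WithTop.coe_le_coe.2 (le_top : (2 : ℕ∞) ≤ ⊤))
  have h1 := (key (fun p => fderiv ℝ F p (1, 0)) (hD'.clm_apply (differentiable_const _))).1 t x
  have h2 := (key (fun p => fderiv ℝ F p (0, 1)) (hD'.clm_apply (differentiable_const _))).2 t x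
  have e : ∀ u, fderiv ℝ (fun p => fderiv ℝ F p u) (t, x) = (fderiv ℝ (fderiv ℝ F) (t, x)).flip u := by
    intro u
    rw [fderiv_clm_apply (hD' _) (differentiableAt_const _)]
    simp
  rw [hz.unique h1, e, ContinuousLinearMap.flip_apply, hsym.eq, ← ContinuousLinearMap.flip_apply, ← e]
  exact h2

/-- The zeroth-order term `V ψ + α |ψ|² ψ` of the NLS equation at one point, as a function of the
values `v = V x` and `a = ψ t x`. -/
noncomputable def nlsSource (α v : ℝ) (a : ℂ) : ℂ := (v : ℂ) * a + ((α * ‖a‖ ^ 2 : ℝ) : ℂ) * a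

/-- The `x`-derivative of `nlsSource α (V x) (ψ t x)`, as a function of `v = V x`, `v' = V' x`,
`a = ψ t x` and `b = ∂ₓψ t x`; here `2 * inner ℝ a b` is `∂ₓ |ψ|²`. -/
noncomputable def nlsSourceX (α v v' : ℝ) (a b : ℂ) : ℂ :=
  (v' : ℂ) * a + (v : ℂ) * b +
    (((α * (2 * inner ℝ a b) : ℝ) : ℂ) * a + ((α * ‖a‖ ^ 2 : ℝ) : ℂ) * b)

lemma abs_normSq_sub_le {B : ℝ} {a₁ a₂ : ℂ} (h1 : ‖a₁‖ ≤ B) (h2 : ‖a₂‖ ≤ B) :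
    |‖a₁‖ ^ 2 - ‖a₂‖ ^ 2| ≤ 2 * B * ‖a₁ - a₂‖ := by
  rw [sq_sub_sq, abs_mul, abs_of_nonneg (by positivity)]
  exact mul_le_mul (by linarith) (abs_norm_sub_norm_le _ _) (abs_nonneg _)
    (by linarith [norm_nonneg a₁])

lemma norm_nlsSource_sub_le {α B v₁ v₂ : ℝ} {a₁ a₂ : ℂ} (hv : |v₁| ≤ B)
    (h1 : ‖a₁‖ ≤ B) (h2 : ‖a₂‖ ≤ B) :
    ‖nlsSource α v₁ a₁ - nlsSource α v₂ a₂‖ ≤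
      (B + 6 * |α| * B ^ 2) * (‖a₁ - a₂‖ + |v₁ - v₂|) := by
  have hB : 0 ≤ B := (norm_nonneg _).trans h1
  have hn := abs_normSq_sub_le h1 h2
  -- Telescoping: only one factor changes from solution 1 to solution 2 in each summand.
  have hdec : nlsSource α v₁ a₁ - nlsSource α v₂ a₂ =
      (v₁ : ℂ) * (a₁ - a₂) + ((v₁ - v₂ : ℝ) : ℂ) * a₂ +
        ((α * ‖a₁‖ ^ 2 : ℝ) : ℂ) * (a₁ - a₂) +
        ((α * (‖a₁‖ ^ 2 - ‖a₂‖ ^ 2) : ℝ) : ℂ) * a₂ := by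
    simp only [nlsSource]; push_cast; ring
  rw [hdec]
  calc _ ≤ |v₁| * ‖a₁ - a₂‖ + |v₁ - v₂| * ‖a₂‖ + |α| * ‖a₁‖ ^ 2 * ‖a₁ - a₂‖
        + |α| * |‖a₁‖ ^ 2 - ‖a₂‖ ^ 2| * ‖a₂‖ := by
        refine (norm_add₄_le ..).trans_eq ?_
        simp only [norm_mul, Complex.norm_real, Real.norm_eq_abs, abs_pow, abs_norm]
    _ ≤ B * ‖a₁ - a₂‖ + |v₁ - v₂| * B + |α| * B ^ 2 * ‖a₁ - a₂‖
        + |α| * (2 * B * ‖a₁ - a₂‖) * B := by gcongr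
    _ ≤ _ := by
        have : 0 ≤ |α| * B ^ 2 * ‖a₁ - a₂‖ := by positivity
        have : 0 ≤ |α| * B ^ 2 * |v₁ - v₂| := by positivity
        linarith

lemma norm_nlsSourceX_sub_le {α B v₁ v₂ v₁' v₂' : ℝ} {a₁ a₂ b₁ b₂ : ℂ} (hv : |v₁| ≤ B)
    (hv' : |v₁'| ≤ B) (h1 : ‖a₁‖ ≤ B) (h2 : ‖a₂‖ ≤ B) (k1 : ‖b₁‖ ≤ B) (k2 : ‖b₂‖ ≤ B) :
    ‖nlsSourceX α v₁ v₁' a₁ b₁ - nlsSourceX α v₂ v₂' a₂ b₂‖ ≤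
      (B + 6 * |α| * B ^ 2) * (‖a₁ - a₂‖ + ‖b₁ - b₂‖ + |v₁ - v₂| + |v₁' - v₂'|) := by
  have hB : 0 ≤ B := (norm_nonneg _).trans h1
  have hn := abs_normSq_sub_le h1 h2
  have hi : ∀ a b : ℂ, |inner ℝ a b| ≤ ‖a‖ * ‖b‖ := abs_real_inner_le_norm
  have hV : ‖((v₁' : ℂ) * a₁ + (v₁ : ℂ) * b₁) - ((v₂' : ℂ) * a₂ + (v₂ : ℂ) * b₂)‖ ≤
      B * (‖a₁ - a₂‖ + ‖b₁ - b₂‖ + |v₁ - v₂| + |v₁' - v₂'|) := by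
    have hdec : ((v₁' : ℂ) * a₁ + (v₁ : ℂ) * b₁) - ((v₂' : ℂ) * a₂ + (v₂ : ℂ) * b₂) =
      (v₁' : ℂ) * (a₁ - a₂) + ((v₁' - v₂' : ℝ) : ℂ) * a₂ + (v₁ : ℂ) * (b₁ - b₂)
        + ((v₁ - v₂ : ℝ) : ℂ) * b₂ := by push_cast; ring
    rw [hdec]
    calc _ ≤ |v₁'| * ‖a₁ - a₂‖ + |v₁' - v₂'| * ‖a₂‖ + |v₁| * ‖b₁ - b₂‖ + |v₁ - v₂| * ‖b₂‖ := by
          refine (norm_add₄_le ..).trans_eq ?_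
          simp only [norm_mul, Complex.norm_real, Real.norm_eq_abs]
      _ ≤ B * ‖a₁ - a₂‖ + |v₁' - v₂'| * B + B * ‖b₁ - b₂‖ + |v₁ - v₂| * B := by gcongr
      _ = _ := by ring
  have hI : ‖((α * (2 * inner ℝ a₁ b₁) : ℝ) : ℂ) * a₁ - ((α * (2 * inner ℝ a₂ b₂) : ℝ) : ℂ) * a₂‖
      ≤ |α| * B ^ 2 * (4 * ‖a₁ - a₂‖ + 2 * ‖b₁ - b₂‖) := by
    have hdec : ((α * (2 * inner ℝ a₁ b₁) : ℝ) : ℂ) * a₁ -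
          ((α * (2 * inner ℝ a₂ b₂) : ℝ) : ℂ) * a₂ =
        ((α * (2 * inner ℝ (a₁ - a₂) b₁) : ℝ) : ℂ) * a₁ +
          ((α * (2 * inner ℝ a₂ (b₁ - b₂)) : ℝ) : ℂ) * a₁ +
          ((α * (2 * inner ℝ a₂ b₂) : ℝ) : ℂ) * (a₁ - a₂) := by
      simp only [inner_sub_left, inner_sub_right]; push_cast; ring
    rw [hdec]
    calc _ ≤ |α| * (2 * |inner ℝ (a₁ - a₂) b₁|) * ‖a₁‖ +
          |α| * (2 * |inner ℝ a₂ (b₁ - b₂)|) * ‖a₁‖ +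
          |α| * (2 * |inner ℝ a₂ b₂|) * ‖a₁ - a₂‖ := by
          refine norm_add₃_le.trans_eq ?_
          simp only [norm_mul, Complex.norm_real, Real.norm_eq_abs, abs_two]
      _ ≤ |α| * (2 * (‖a₁ - a₂‖ * B)) * B + |α| * (2 * (B * ‖b₁ - b₂‖)) * B +
          |α| * (2 * (B * B)) * ‖a₁ - a₂‖ := by
          gcongr
          · exact (hi _ _).trans (by gcongr)
          · exact (hi _ _).trans (by gcongr)
          · exact (hi _ _).trans (by gcongr)
      _ = _ := by ring
  have hN : ‖((α * ‖a₁‖ ^ 2 : ℝ) : ℂ) * b₁ - ((α * ‖a₂‖ ^ 2 : ℝ) : ℂ) * b₂‖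
      ≤ |α| * B ^ 2 * (2 * ‖a₁ - a₂‖ + ‖b₁ - b₂‖) := by
    have hdec : ((α * ‖a₁‖ ^ 2 : ℝ) : ℂ) * b₁ - ((α * ‖a₂‖ ^ 2 : ℝ) : ℂ) * b₂ =
        ((α * ‖a₁‖ ^ 2 : ℝ) : ℂ) * (b₁ - b₂) +
        ((α * (‖a₁‖ ^ 2 - ‖a₂‖ ^ 2) : ℝ) : ℂ) * b₂ := by push_cast; ring
    rw [hdec]
    calc _ ≤ |α| * ‖a₁‖ ^ 2 * ‖b₁ - b₂‖ + |α| * |‖a₁‖ ^ 2 - ‖a₂‖ ^ 2| * ‖b₂‖ := by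
          refine (norm_add_le _ _).trans_eq ?_
          simp only [norm_mul, Complex.norm_real, Real.norm_eq_abs, abs_pow, abs_norm]
      _ ≤ |α| * B ^ 2 * ‖b₁ - b₂‖ + |α| * (2 * B * ‖a₁ - a₂‖) * B := by gcongr
      _ = _ := by ring
  have hdec : nlsSourceX α v₁ v₁' a₁ b₁ - nlsSourceX α v₂ v₂' a₂ b₂ =
      (((v₁' : ℂ) * a₁ + (v₁ : ℂ) * b₁) - ((v₂' : ℂ) * a₂ + (v₂ : ℂ) * b₂)) +
      (((α * (2 * inner ℝ a₁ b₁) : ℝ) : ℂ) * a₁ - ((α * (2 * inner ℝ a₂ b₂) : ℝ) : ℂ) * a₂) +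
      (((α * ‖a₁‖ ^ 2 : ℝ) : ℂ) * b₁ - ((α * ‖a₂‖ ^ 2 : ℝ) : ℂ) * b₂) := by
    simp only [nlsSourceX]; ring
  rw [hdec]
  refine norm_add₃_le.trans ((add_le_add_three hV hI hN).trans ?_)
  have e1 : 0 ≤ |α| * B ^ 2 * ‖b₁ - b₂‖ := by positivity
  have e2 : 0 ≤ |α| * B ^ 2 * |v₁ - v₂| := by positivity
  have e3 : 0 ≤ |α| * B ^ 2 * |v₁' - v₂'| := by positivity
  linarith

/-- A smooth periodic NLS solution satisfies `ψₜ = (i/2) ψₓₓ - i G`, and, by differentiating the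
equation in `x` and exchanging `∂ₓ` with `∂ₜ`, also `ψₓₜ = (i/2) ψₓₓₓ - i ∂ₓG`, where
`G = V ψ + α |ψ|² ψ`. All derivatives involved exist and are jointly continuous, and `ψₓ`, `ψₓₓ`
are periodic. -/
lemma solution_facts (α L : ℝ) (V : ℝ → ℝ) (f : ℝ → ℝ → ℂ) (hV : ContDiff ℝ (⊤ : ℕ∞) V)
    (hf : ContDiff ℝ (⊤ : ℕ∞) fun p : ℝ × ℝ => f p.1 p.2)
    (hper : ∀ t x, f t (x + 2 * L) = f t x)
    (hpde : ∀ t x : ℝ, Complex.I * deriv (fun s => f s x) t =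
            -(1 / 2 : ℂ) * deriv (fun y => deriv (fun z => f t z) y) x
              + (V x : ℂ) * f t x + ((α * ‖f t x‖ ^ 2 : ℝ) : ℂ) * f t x) :
    ∃ fx fxx fxxx ft fxt : ℝ → ℝ → ℂ,
      (Continuous fun p : ℝ × ℝ => fx p.1 p.2) ∧
      (Continuous fun p : ℝ × ℝ => fxx p.1 p.2) ∧
      (Continuous fun p : ℝ × ℝ => fxxx p.1 p.2) ∧
      (Continuous fun p : ℝ × ℝ => ft p.1 p.2) ∧
      (Continuous fun p : ℝ × ℝ => fxt p.1 p.2) ∧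
      (∀ t x, HasDerivAt (f t) (fx t x) x) ∧
      (∀ t x, HasDerivAt (fx t) (fxx t x) x) ∧
      (∀ t x, HasDerivAt (fxx t) (fxxx t x) x) ∧
      (∀ t x, HasDerivAt (fun s => f s x) (ft t x) t) ∧
      (∀ t x, HasDerivAt (fun s => fx s x) (fxt t x) t) ∧
      (∀ t x, fx t (x + 2 * L) = fx t x) ∧
      (∀ t x, fxx t (x + 2 * L) = fxx t x) ∧
      (∀ t x, ft t x = Complex.I * (1 / 2 * fxx t x) - Complex.I * nlsSource α (V x) (f t x)) ∧
      (∀ t x, fxt t x = Complex.I * (1 / 2 * fxxx t x)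
        - Complex.I * nlsSourceX α (V x) (deriv V x) (f t x) (fx t x)) := by
  obtain ⟨fx, ft, cfx, cft, dfx, dft, hmix⟩ := partial_facts f hf
  obtain ⟨fxx, fxt, cfxx, cfxt, dfxx, dfxt, -⟩ := partial_facts fx cfx
  obtain ⟨fxxx, -, cfxxx, -, dfxxx, -⟩ := partial_facts fxx cfxx
  have pdx : ∀ g gx : ℝ → ℝ → ℂ, (∀ t x, HasDerivAt (g t) (gx t x) x) →
      (∀ t x, g t (x + 2 * L) = g t x) → ∀ t x, gx t (x + 2 * L) = gx t x := by
    intro g gx hg hp t x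
    refine (((hg t (x + 2 * L)).comp_add_const x (2 * L)).congr_of_eventuallyEq
      (.of_forall fun y => (hp t y).symm)).unique (hg t x)
  have p1 := pdx f fx dfx hper
  have p2 := pdx fx fxx dfxx p1
  have hft : ∀ t x, ft t x =
      Complex.I * (1 / 2 * fxx t x) - Complex.I * nlsSource α (V x) (f t x) := by
    intro t x
    have h := hpde t x
    have e1 : (fun y => deriv (fun z => f t z) y) = fx t := funext fun y => (dfx t y).deriv
    rw [(dft t x).deriv, e1, (dfxx t x).deriv] at h
    -- Multiplying the equation by `-i` isolates the time derivative.
    have h' := congrArg (fun z => -Complex.I * z) h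
    simp only [← mul_assoc, neg_mul, Complex.I_mul_I] at h'
    simp only [nlsSource]
    linear_combination h'
  refine ⟨fx, fxx, fxxx, ft, fxt, cfx.continuous, cfxx.continuous, cfxxx.continuous,
    cft.continuous, cfxt.continuous, dfx, dfxx, dfxxx, dft, dfxt, p1, p2, hft, ?_⟩
  intro t x
  refine (dfxt t x).unique (hmix t x _ ?_)
  have hVd : HasDerivAt (fun y => (V y : ℂ)) ((deriv V x : ℝ) : ℂ) x :=
    ((hV.differentiable (by simp)) x).hasDerivAt.ofReal_comp
  have hN : HasDerivAt (fun y => ((α * ‖f t y‖ ^ 2 : ℝ) : ℂ))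
      ((α * (2 * inner ℝ (f t x) (fx t x)) : ℝ) : ℂ) x :=
    ((dfx t x).norm_sq.const_mul α).ofReal_comp
  have hS : HasDerivAt (fun y => nlsSource α (V y) (f t y))
      (nlsSourceX α (V x) (deriv V x) (f t x) (fx t x)) x :=
    (hVd.mul (dfx t x)).add (hN.mul (dfx t x))
  rw [show ft t = fun y => Complex.I * (1 / 2 * fxx t y) -
    Complex.I * nlsSource α (V y) (f t y) from funext (hft t)]
  exact (((dfxxx t x).const_mul _).const_mul _).sub (hS.const_mul _)

/-- The pointwise balance law for `‖w‖² + ‖wx‖²` when `wₜ = (i/2) wxx - i g` and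
`∂ₜwx = (i/2) wxxx - i gx`. The left side is the time derivative of this density. On the right,
the first two brackets are the `x`-derivative of the flux `⟪w, i wx⟫ + ⟪wx, i wxx⟫`, expanded by
the product rule; its terms `⟪z, i z⟫` vanish. -/
lemma energy_density_le {K δ δ' : ℝ} {w wx wxx wxxx g gx : ℂ} (hK : 0 ≤ K)
    (hg : ‖g‖ ≤ K * (‖w‖ + |δ|)) (hgx : ‖gx‖ ≤ K * (‖w‖ + ‖wx‖ + |δ| + |δ'|)) :
    2 * inner ℝ w (Complex.I * (1 / 2 * wxx) - Complex.I * g) +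
      2 * inner ℝ wx (Complex.I * (1 / 2 * wxxx) - Complex.I * gx) ≤
    (inner ℝ w (Complex.I * wxx) + inner ℝ wx (Complex.I * wx)) +
      (inner ℝ wx (Complex.I * wxxx) + inner ℝ wxx (Complex.I * wxx)) +
      5 * K * ((‖w‖ ^ 2 + ‖wx‖ ^ 2) + (δ ^ 2 + δ' ^ 2)) := by
  have h0 : ∀ z : ℂ, inner ℝ z (Complex.I * z) = 0 := fun z => by
    simp [Complex.inner]; ring
  have hh : ∀ z : ℂ, Complex.I * (1 / 2 * z) = (1 / 2 : ℝ) • (Complex.I * z) := fun z => by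
    simp; ring
  have hb : ∀ a b : ℂ, -inner ℝ a (Complex.I * b) ≤ ‖a‖ * ‖b‖ := fun a b => by
    simpa using neg_le_of_abs_le (abs_real_inner_le_norm a (Complex.I * b))
  rw [h0, h0, inner_sub_right, inner_sub_right, hh, hh, real_inner_smul_right,
    real_inner_smul_right]
  have b1 := (hb w g).trans (mul_le_mul_of_nonneg_left hg (norm_nonneg _))
  have b2 := (hb wx gx).trans (mul_le_mul_of_nonneg_left hgx (norm_nonneg _))
  have key : 2 * (‖w‖ * (‖w‖ + |δ|)) + 2 * (‖wx‖ * (‖w‖ + ‖wx‖ + |δ| + |δ'|)) ≤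
      5 * ((‖w‖ ^ 2 + ‖wx‖ ^ 2) + (δ ^ 2 + δ' ^ 2)) := by
    rw [← sq_abs δ, ← sq_abs δ']
    nlinarith [sq_nonneg (‖w‖ - |δ|), sq_nonneg (‖wx‖ - |δ|), sq_nonneg (‖wx‖ - |δ'|),
      sq_nonneg (‖wx‖ - ‖w‖), sq_nonneg ‖w‖, sq_nonneg |δ|, sq_nonneg |δ'|]
  have := mul_le_mul_of_nonneg_left key hK
  linarith

/-- Continuous dependence of NLS solutions on the potential (Lemma 3.2 of the paper):
two smooth spatially periodic solutions with the same initial data and potentials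
`V₁, V₂` (all bounded by `B` together with their first derivatives) satisfy the
`H¹`-difference estimate `‖ψ₁(t,·) - ψ₂(t,·)‖_{H¹} ≤ C ‖V₁ - V₂‖_{H¹}` on `[0,T]`,
with `C` depending only on `α, T, L, B`. -/
theorem nls_continuous_dependence_on_potential
    (α T L B : ℝ) (hT : 0 < T) (hL : 0 < L) (hB : 0 < B) :
    ∃ C : ℝ, 0 < C ∧
      ∀ (V₁ V₂ : ℝ → ℝ) (ψ₁ ψ₂ : ℝ → ℝ → ℂ),
        ContDiff ℝ (⊤ : ℕ∞) V₁ → ContDiff ℝ (⊤ : ℕ∞) V₂ →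
        (∀ x : ℝ, V₁ (x + 2 * L) = V₁ x) → (∀ x : ℝ, V₂ (x + 2 * L) = V₂ x) →
        (∀ x : ℝ, |V₁ x| + |deriv V₁ x| ≤ B) →
        (∀ x : ℝ, |V₂ x| + |deriv V₂ x| ≤ B) →
        ContDiff ℝ (⊤ : ℕ∞) (fun p : ℝ × ℝ => ψ₁ p.1 p.2) →
        ContDiff ℝ (⊤ : ℕ∞) (fun p : ℝ × ℝ => ψ₂ p.1 p.2) →
        (∀ t x : ℝ, ψ₁ t (x + 2 * L) = ψ₁ t x) →
        (∀ t x : ℝ, ψ₂ t (x + 2 * L) = ψ₂ t x) →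
        (∀ t x : ℝ,
          Complex.I * deriv (fun s => ψ₁ s x) t =
            -(1 / 2 : ℂ) * deriv (fun y => deriv (fun z => ψ₁ t z) y) x
              + (V₁ x : ℂ) * ψ₁ t x
              + ((α * ‖ψ₁ t x‖ ^ 2 : ℝ) : ℂ) * ψ₁ t x) →
        (∀ t x : ℝ,
          Complex.I * deriv (fun s => ψ₂ s x) t =
            -(1 / 2 : ℂ) * deriv (fun y => deriv (fun z => ψ₂ t z) y) x
              + (V₂ x : ℂ) * ψ₂ t x
              + ((α * ‖ψ₂ t x‖ ^ 2 : ℝ) : ℂ) * ψ₂ t x) →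
        (∀ x : ℝ, ψ₁ 0 x = ψ₂ 0 x) →
        (∀ t ∈ Set.Icc (0 : ℝ) T, ∀ x : ℝ,
          ‖ψ₁ t x‖ + ‖deriv (fun y => ψ₁ t y) x‖ ≤ B) →
        (∀ t ∈ Set.Icc (0 : ℝ) T, ∀ x : ℝ,
          ‖ψ₂ t x‖ + ‖deriv (fun y => ψ₂ t y) x‖ ≤ B) →
        ∀ t ∈ Set.Icc (0 : ℝ) T,
          Real.sqrt (∫ x in (-L)..L,
              (‖ψ₁ t x - ψ₂ t x‖ ^ 2
                + ‖deriv (fun y => ψ₁ t y) x - deriv (fun y => ψ₂ t y) x‖ ^ 2))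
            ≤ C * Real.sqrt (∫ x in (-L)..L,
                ((V₁ x - V₂ x) ^ 2 + (deriv V₁ x - deriv V₂ x) ^ 2)) := by
  set K := B + 6 * |α| * B ^ 2 with hKdef
  have hK : 0 ≤ K := by positivity
  refine ⟨Real.sqrt (Real.exp (5 * K * T)), by positivity, ?_⟩
  intro V₁ V₂ ψ₁ ψ₂ hV₁ hV₂ _ _ hB₁ _ hψ₁ hψ₂ hp₁ hp₂ hpde₁ hpde₂ hinit hb₁ hb₂ t ht
  obtain ⟨f, fxx, fxxx, ft, fxt, cf, cfxx, cfxxx, cft, cfxt, df, dfxx, dfxxx, dft, dfxt, pf, pfxx,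
    ef, efx⟩ := solution_facts α L V₁ ψ₁ hV₁ hψ₁ hp₁ hpde₁
  obtain ⟨g, gxx, gxxx, gt, gxt, cg, cgxx, cgxxx, cgt, cgxt, dg, dgxx, dgxxx, dgt, dgxt, pg, pgxx,
    eg, egx⟩ := solution_facts α L V₂ ψ₂ hV₂ hψ₂ hp₂ hpde₂
  have c₁ := hψ₁.continuous
  have c₂ := hψ₂.continuous
  have hder₁ : ∀ t x, deriv (fun y => ψ₁ t y) x = f t x := fun t x => (df t x).deriv
  have hder₂ : ∀ t x, deriv (fun y => ψ₂ t y) x = g t x := fun t x => (dg t x).deriv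
  simp only [hder₁, hder₂] at hb₁ hb₂ ⊢
  rw [← Real.sqrt_mul (Real.exp_nonneg _)]
  apply Real.sqrt_le_sqrt
  have hdV₁ : Continuous (deriv V₁) := hV₁.continuous_deriv (by simp)
  have hdV₂ : Continuous (deriv V₂) := hV₂.continuous_deriv (by simp)
  have hend : ∀ u : ℝ → ℂ, (∀ x, u (x + 2 * L) = u x) → u L = u (-L) := fun u hu => by
    rw [← hu (-L)]; congr 1; ring
  refine integral_le_of_balance_law T L (5 * K) hL (by positivity)
    (fun t x => ‖ψ₁ t x - ψ₂ t x‖ ^ 2 + ‖f t x - g t x‖ ^ 2)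
    (fun t x => 2 * inner ℝ (ψ₁ t x - ψ₂ t x) (ft t x - gt t x) +
      2 * inner ℝ (f t x - g t x) (fxt t x - gxt t x))
    (fun t x => inner ℝ (ψ₁ t x - ψ₂ t x) (Complex.I * (f t x - g t x)) +
      inner ℝ (f t x - g t x) (Complex.I * (fxx t x - gxx t x)))
    (fun t x => (inner ℝ (ψ₁ t x - ψ₂ t x) (Complex.I * (fxx t x - gxx t x)) +
        inner ℝ (f t x - g t x) (Complex.I * (f t x - g t x))) +
      (inner ℝ (f t x - g t x) (Complex.I * (fxxx t x - gxxx t x)) +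
        inner ℝ (fxx t x - gxx t x) (Complex.I * (fxx t x - gxx t x))))
    (fun x => (V₁ x - V₂ x) ^ 2 + (deriv V₁ x - deriv V₂ x) ^ 2)
    (by fun_prop) (by fun_prop) ?_ ?_ ?_ ?_ ?_ (fun x => by positivity) ?_ ?_ ht
  · exact fun t x => ((dft t x).sub (dgt t x)).norm_sq.add ((dfxt t x).sub (dgxt t x)).norm_sq
  · exact fun t x =>
      (((df t x).sub (dg t x)).inner ℝ (((dfxx t x).sub (dgxx t x)).const_mul Complex.I)).add
      (((dfxx t x).sub (dgxx t x)).inner ℝ (((dfxxx t x).sub (dgxxx t x)).const_mul Complex.I))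
  · intro t
    have hs : Continuous fun x : ℝ => (t, x) := by fun_prop
    have k1 := c₁.comp hs
    have k2 := c₂.comp hs
    have k3 := cf.comp hs
    have k4 := cg.comp hs
    have k5 := cfxx.comp hs
    have k6 := cgxx.comp hs
    have k7 := cfxxx.comp hs
    have k8 := cgxxx.comp hs
    simp only [Function.comp_def] at k1 k2 k3 k4 k5 k6 k7 k8
    fun_prop
  · intro t
    simp only [hend _ (hp₁ t), hend _ (hp₂ t), hend _ (pf t), hend _ (pg t), hend _ (pfxx t),
      hend _ (pgxx t)]
  · have := hV₁.continuous
    have := hV₂.continuous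
    fun_prop
  · intro s hs x
    have n1 := hb₁ s hs x
    have n2 := hb₂ s hs x
    have n3 := hB₁ x
    have a1 := norm_nonneg (ψ₁ s x)
    have a2 := norm_nonneg (ψ₂ s x)
    have a3 := norm_nonneg (f s x)
    have a4 := norm_nonneg (g s x)
    have a5 := abs_nonneg (V₁ x)
    have a6 := abs_nonneg (deriv V₁ x)
    have h1 : ft s x - gt s x = Complex.I * (1 / 2 * (fxx s x - gxx s x)) -
        Complex.I * (nlsSource α (V₁ x) (ψ₁ s x) - nlsSource α (V₂ x) (ψ₂ s x)) := by
      rw [ef, eg]; ring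
    have h2 : fxt s x - gxt s x = Complex.I * (1 / 2 * (fxxx s x - gxxx s x)) -
        Complex.I * (nlsSourceX α (V₁ x) (deriv V₁ x) (ψ₁ s x) (f s x) -
          nlsSourceX α (V₂ x) (deriv V₂ x) (ψ₂ s x) (g s x)) := by
      rw [efx, egx]; ring
    simp only [h1, h2]
    exact energy_density_le hK
      (norm_nlsSource_sub_le (by linarith) (by linarith) (by linarith))
      (norm_nlsSourceX_sub_le (by linarith) (by linarith) (by linarith) (by linarith)
        (by linarith) (by linarith))
  · intro x
    have h0 : ψ₁ 0 = ψ₂ 0 := funext hinit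
    have h1 : f 0 x = g 0 x := by rw [← hder₁, ← hder₂, h0]
    simp [h0, h1]
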